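/- For λ = 1/2 and all φ, ψ ∈ A, one has C^{1/2}_1(φ,ψ) = (1/2){φ,ψ}; that is, the first-order coefficient of the star product ⋆_{1/2} is half the Poisson bracket. -/

import Mathlib

open MvPolynomial

/-- The polynomial symbol algebra `A = ℂ[u₁,…,uₙ,ξ₁,…,ξₙ]`: variables `Sum.inl i` are the
`uᵢ` and variables `Sum.inr i` are the `ξᵢ`. -/
abbrev PolA (n : ℕ) := MvPolynomial (Fin n ⊕ Fin n) ℂ

namespace LO

/-- ξ-degree of a monomial exponent. -/
def xiDeg {n : ℕ} (d : (Fin n ⊕ Fin n) →₀ ℕ) : ℕ :=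
  ∑ i : Fin n, d (Sum.inr i)

/-- `c(E)`: the operator multiplying the ξ-degree-`m` component by `c m`. -/
noncomputable def cE {n : ℕ} (c : ℕ → ℂ) (φ : PolA n) : PolA n :=
  ∑ d ∈ φ.support, monomial d (c (xiDeg d) * coeff d φ)

/-- `D = Σᵢ ∂²/∂uᵢ∂ξᵢ`. -/
noncomputable def Dop {n : ℕ} (φ : PolA n) : PolA n :=
  ∑ i : Fin n, pderiv (Sum.inl i) (pderiv (Sum.inr i) φ)

/-- The scalar `h^λ_d(m)`. -/
noncomputable def hScal (n : ℕ) (lam : ℂ) (d m : ℕ) : ℂ :=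
  (d.factorial : ℂ)⁻¹ *
    ∏ j ∈ Finset.range d,
      ((m : ℂ) + (j : ℂ) + lam * ((n : ℂ) + 1)) /
        (2 * (m : ℂ) + (j : ℂ) + (n : ℂ) + (d : ℂ))

/-- The scalar `g^λ_d(m)`. -/
noncomputable def gScal (n : ℕ) (lam : ℂ) (d m : ℕ) : ℂ :=
  (d.factorial : ℂ)⁻¹ *
    ∏ j ∈ Finset.range d,
      (-(m : ℂ) - (j : ℂ) - lam * ((n : ℂ) + 1)) /
        (2 * (m : ℂ) + (j : ℂ) + (n : ℂ) + 1)

/-- `bh^λ_d = h^λ_d(E) ∘ D^d` (equal to the identity for `d = 0`). -/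
noncomputable def bh {n : ℕ} (lam : ℂ) (d : ℕ) (φ : PolA n) : PolA n :=
  cE (hScal n lam d) (Dop^[d] φ)

/-- `bg^λ_d = g^λ_d(E) ∘ D^d` (equal to the identity for `d = 0`). -/
noncomputable def bg {n : ℕ} (lam : ℂ) (d : ℕ) (φ : PolA n) : PolA n :=
  cE (gScal n lam d) (Dop^[d] φ)

/-- `N_k(φ,ψ) = (1/k!) Σ_{α ∈ {1,…,n}^k} ∂^kφ/∂ξ_α · ∂^kψ/∂u_α`. -/
noncomputable def Nop {n : ℕ} (k : ℕ) (φ ψ : PolA n) : PolA n :=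
  (k.factorial : ℂ)⁻¹ •
    ∑ α : Fin k → Fin n,
      ((List.ofFn α).foldr (fun i acc => pderiv (Sum.inr i) acc) φ) *
      ((List.ofFn α).foldr (fun i acc => pderiv (Sum.inl i) acc) ψ)

/-- The coefficient `C^λ_p` of the Lecomte–Ovsienko star product. -/
noncomputable def C (n : ℕ) (lam : ℂ) (p : ℕ) (φ ψ : PolA n) : PolA n :=
  ∑ i ∈ Finset.range (p + 1), ∑ j ∈ Finset.range (p + 1),
    ∑ k ∈ Finset.range (p + 1), ∑ m ∈ Finset.range (p + 1),
      if i + j + k + m = p then bg lam m (Nop k (bh lam i φ) (bh lam j ψ)) else 0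

/-- The Poisson bracket `{φ,ψ}`. -/
noncomputable def pb {n : ℕ} (φ ψ : PolA n) : PolA n :=
  ∑ i : Fin n,
    (pderiv (Sum.inr i) φ * pderiv (Sum.inl i) ψ
      - pderiv (Sum.inl i) φ * pderiv (Sum.inr i) ψ)

/-- `φ ∈ A^m` (ξ-homogeneous of degree `m`; for `m < 0` this forces `φ = 0`). -/
def IsXiHomog {n : ℕ} (m : ℤ) (φ : PolA n) : Prop :=
  ∀ d ∈ φ.support, (xiDeg d : ℤ) = m

/-- The set of spanning momentum functions of the projective `sl_{n+1}(ℝ)`-action. -/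
noncomputable def momSet (n : ℕ) : Set (PolA n) :=
  (Set.range fun i : Fin n => (X (Sum.inr i) : PolA n)) ∪
  (Set.range fun ij : Fin n × Fin n =>
    (X (Sum.inl ij.1) * X (Sum.inr ij.2) : PolA n)) ∪
  (Set.range fun i : Fin n =>
    (X (Sum.inl i) * ∑ k : Fin n, X (Sum.inl k) * X (Sum.inr k) : PolA n))

/-- The span `M` of the momentum functions. -/
noncomputable def momSpan (n : ℕ) : Submodule ℂ (PolA n) := Submodule.span ℂ (momSet n)

/-- The Weyl algebra `W` of differential operators with polynomial coefficients,
as a subalgebra of `End_ℂ(A)`. -/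
noncomputable def Weyl (n : ℕ) : Subalgebra ℂ (Module.End ℂ (PolA n)) :=
  Algebra.adjoin ℂ
    ((Set.range fun i : Fin n =>
        (LinearMap.mulLeft ℂ (X (Sum.inl i)) : Module.End ℂ (PolA n))) ∪
     (Set.range fun i : Fin n =>
        (LinearMap.mulLeft ℂ (X (Sum.inr i)) : Module.End ℂ (PolA n))) ∪
     (Set.range fun v : Fin n ⊕ Fin n =>
        ((pderiv v).toLinearMap : Module.End ℂ (PolA n))))

/-- A bilinear map `B : A × A → A` is bidifferential if it is a finite sum
`B(φ,ψ) = Σ_α A_α(φ)·B_α(ψ)` with `A_α, B_α` in the Weyl algebra. -/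
def Bidiff (n : ℕ) (B : PolA n → PolA n → PolA n) : Prop :=
  ∃ (N : ℕ) (Aop Bop : Fin N → Weyl n),
    ∀ φ ψ : PolA n,
      B φ ψ = ∑ α : Fin N,
        (Aop α : Module.End ℂ (PolA n)) φ * (Bop α : Module.End ℂ (PolA n)) ψ

/-- The scalar by which `T_p = ∏_{i=1}^{⌊p/2⌋}(E'+i)` acts on `A^m`. -/
noncomputable def TScal (n p m : ℕ) : ℂ :=
  ∏ i ∈ Finset.Icc 1 (p / 2), ((m : ℂ) + (n : ℂ) / 2 + (i : ℂ))

/-- The scalar by which `S_p = ∏_{i=1}^{⌊p/2⌋}(E'−i)` acts on `A^m`. -/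
noncomputable def SScal (n p m : ℕ) : ℂ :=
  ∏ i ∈ Finset.Icc 1 (p / 2), ((m : ℂ) + (n : ℂ) / 2 - (i : ℂ))

/-- The operator `T_p`. -/
noncomputable def Tp (n p : ℕ) : PolA n → PolA n := cE (TScal n p)

/-- The operator `S_p`. -/
noncomputable def Sp (n p : ℕ) : PolA n → PolA n := cE (SScal n p)

/-- The fiberwise Euler operator `E = Σ ξᵢ ∂/∂ξᵢ` as an endomorphism. -/
noncomputable def Elin (n : ℕ) : Module.End ℂ (PolA n) :=
  ∑ i : Fin n,
    (LinearMap.mulLeft ℂ (X (Sum.inr i)) : Module.End ℂ (PolA n)) ∘ₗ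
      (pderiv (Sum.inr i)).toLinearMap

/-- `E' = E + n/2` as an endomorphism. -/
noncomputable def E'lin (n : ℕ) : Module.End ℂ (PolA n) :=
  Elin n + ((n : ℂ) / 2) • 1

/-- `D` as an endomorphism. -/
noncomputable def Dlin (n : ℕ) : Module.End ℂ (PolA n) :=
  ∑ i : Fin n,
    ((pderiv (Sum.inl i)).toLinearMap : Module.End ℂ (PolA n)) ∘ₗ
      (pderiv (Sum.inr i)).toLinearMap

/-- `L^{(m)} = −(1/16)(ξ_m∘D − 2E'∘∂/∂u_m)∘D`. -/
noncomputable def Lop (n : ℕ) (m : Fin n) : Module.End ℂ (PolA n) :=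
  (-(1 / 16 : ℂ)) •
    (((LinearMap.mulLeft ℂ (X (Sum.inr m)) : Module.End ℂ (PolA n)) ∘ₗ Dlin n
        - (2 : ℂ) • (E'lin n ∘ₗ (pderiv (Sum.inl m)).toLinearMap)) ∘ₗ Dlin n)

end LO

/-! Since `g^λ_1 = -h^λ_1`, the coefficient `C^λ_1` is `N_1` minus the defect of the Leibniz rule
for `bh^λ_1`. At `λ = 1/2` the factor `m + λ(n+1)` is half the denominator `2m + n + 1`, so
`bh^{1/2}_1 = D/2`. The Leibniz defect of the second-order operator `D` is the symmetric expression
`N_1(φ,ψ) + N_1(ψ,φ)`, and subtracting half of it from `N_1(φ,ψ)` leaves half of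
`N_1(φ,ψ) - N_1(ψ,φ) = {φ,ψ}`. -/

lemma derivation_derivation_mul {R A : Type*} [CommSemiring R] [CommSemiring A] [Algebra R A]
    (D₁ D₂ : Derivation R A A) (a b : A) :
    D₁ (D₂ (a * b)) = D₁ (D₂ a) * b + a * D₁ (D₂ b) + (D₁ a * D₂ b + D₂ a * D₁ b) := by
  simp only [Derivation.leibniz, map_add, smul_eq_mul]
  ring

namespace LO

section Scalars

variable (n : ℕ) (lam : ℂ)

lemma hScal_zero : hScal n lam 0 = fun _ => 1 := by
  funext m
  simp [hScal]

lemma gScal_zero : gScal n lam 0 = fun _ => 1 := by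
  funext m
  simp [gScal]

lemma gScal_one_eq_neg_hScal_one : gScal n lam 1 = -hScal n lam 1 := by
  funext m
  simp only [gScal, hScal, Finset.prod_range_one, Pi.neg_apply, Nat.cast_zero, Nat.cast_one]
  ring

lemma hScal_half_one : hScal n (1 / 2) 1 = fun _ => 1 / 2 := by
  funext m
  have denom_ne_zero : 2 * (m : ℂ) + n + 1 ≠ 0 := by exact_mod_cast Nat.succ_ne_zero (2 * m + n)
  simp only [hScal, Nat.factorial_one, Nat.cast_one, inv_one, one_mul, Finset.prod_range_one,
    Nat.cast_zero, add_zero]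
  rw [div_eq_iff denom_ne_zero]
  ring

end Scalars

variable {n : ℕ}

lemma cE_const (a : ℂ) (φ : PolA n) : cE (fun _ => a) φ = a • φ := by
  conv_rhs => rw [φ.as_sum, Finset.smul_sum]
  simp only [cE, smul_monomial, smul_eq_mul]

lemma cE_neg (c : ℕ → ℂ) (φ : PolA n) : cE (-c) φ = -cE c φ := by
  simp only [cE, Pi.neg_apply, neg_mul, map_neg, Finset.sum_neg_distrib]

lemma bh_zero (lam : ℂ) (φ : PolA n) : bh lam 0 φ = φ := by
  rw [bh, hScal_zero, cE_const, one_smul, Function.iterate_zero_apply]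

lemma bg_zero (lam : ℂ) (φ : PolA n) : bg lam 0 φ = φ := by
  rw [bg, gScal_zero, cE_const, one_smul, Function.iterate_zero_apply]

lemma bg_one_eq_neg_bh_one (lam : ℂ) (φ : PolA n) : bg lam 1 φ = -bh lam 1 φ := by
  rw [bg, bh, gScal_one_eq_neg_hScal_one, cE_neg]

lemma bh_half_one (φ : PolA n) : bh (1 / 2) 1 φ = (1 / 2 : ℂ) • Dop φ := by
  rw [bh, hScal_half_one, cE_const, Function.iterate_one]

lemma Nop_zero (φ ψ : PolA n) : Nop 0 φ ψ = φ * ψ := by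
  simp [Nop]

lemma Nop_one (φ ψ : PolA n) :
    Nop 1 φ ψ = ∑ i : Fin n, pderiv (Sum.inr i) φ * pderiv (Sum.inl i) ψ := by
  simp only [Nop, Nat.factorial_one, Nat.cast_one, inv_one, one_smul]
  refine Fintype.sum_equiv (Equiv.funUnique (Fin 1) (Fin n)) _ _ fun α => ?_
  simp [List.ofFn_succ]

lemma Dop_mul (φ ψ : PolA n) :
    Dop (φ * ψ) = Dop φ * ψ + φ * Dop ψ + (Nop 1 φ ψ + Nop 1 ψ φ) := by
  simp only [Dop, Nop_one, Finset.sum_mul, Finset.mul_sum, ← Finset.sum_add_distrib]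
  refine Finset.sum_congr rfl fun i _ => ?_
  rw [derivation_derivation_mul]
  ring

lemma pb_eq_Nop_one_sub (φ ψ : PolA n) : pb φ ψ = Nop 1 φ ψ - Nop 1 ψ φ := by
  simp only [pb, Nop_one, ← Finset.sum_sub_distrib, mul_comm]

lemma C_one (lam : ℂ) (φ ψ : PolA n) :
    C n lam 1 φ ψ =
      Nop 1 φ ψ - (bh lam 1 (φ * ψ) - bh lam 1 φ * ψ - φ * bh lam 1 ψ) := by
  have expand : C n lam 1 φ ψ =
      bg lam 1 (Nop 0 (bh lam 0 φ) (bh lam 0 ψ)) + bg lam 0 (Nop 1 (bh lam 0 φ) (bh lam 0 ψ))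
        + bg lam 0 (Nop 0 (bh lam 0 φ) (bh lam 1 ψ))
        + bg lam 0 (Nop 0 (bh lam 1 φ) (bh lam 0 ψ)) := by
    simp [C, Finset.sum_range_succ]
  rw [expand]
  simp only [bh_zero, bg_zero, bg_one_eq_neg_bh_one, Nop_zero]
  ring

end LO

/-- `C^{1/2}_1(φ,ψ) = (1/2){φ,ψ}` for all `φ, ψ ∈ A`. -/
theorem stmt_7 (n : ℕ) (hn : 1 ≤ n) (φ ψ : PolA n) :
    LO.C n (1 / 2) 1 φ ψ = (1 / 2 : ℂ) • LO.pb φ ψ := by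
  calc LO.C n (1 / 2) 1 φ ψ
      = LO.Nop 1 φ ψ - (1 / 2 : ℂ) • (LO.Dop (φ * ψ) - LO.Dop φ * ψ - φ * LO.Dop ψ) := by
        simp only [LO.C_one, LO.bh_half_one, smul_sub, smul_mul_assoc, mul_smul_comm]
    _ = LO.Nop 1 φ ψ - (1 / 2 : ℂ) • (LO.Nop 1 φ ψ + LO.Nop 1 ψ φ) := by
        rw [LO.Dop_mul]
        module
    _ = (1 / 2 : ℂ) • LO.pb φ ψ := by
        rw [LO.pb_eq_Nop_one_sub]
        module
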